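/- arXiv:1612.07607 — 3 statements merged into one kernel-verified Lean document; each statement's English description precedes it below -/
import Mathlib

section
/- Let Ψ be a unit vector in ℂ^{dA}⊗ℂ^{dB}⊗ℂ^{dC} with reduced state ρ_Ψ on AB, let {α_a}_{a=1}^{dA} be an orthonormal basis of ℂ^{dA}, and suppose that for every a there are a unit vector β_a ∈ ℂ^{dB} and p_a > 0 with Tr_A[ρ_Ψ(|α_a⟩⟨α_a|⊗I_B)] = p_a|β_a⟩⟨β_a| (the β_a need not be orthogonal). Then there exist unit vectors γ_a ∈ ℂ^{dC} and complex numbers c_a with |c_a|² = p_a such that Ψ = Σ_{a=1}^{dA} c_a α_a⊗β_a⊗γ_a. -/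
/-!
Contracting `Ψ` with `α_a` gives a vector of `ℂ^{dB} ⊗ ℂ^{dC}`; read as a `dB × dC` matrix `M_a`,
its Gram matrix `M_a M_aᴴ` is the conditional state for `α_a` (`condState_reducedAB`). Since this
is `p_a |β_a⟩⟨β_a|`, the matrix `M_a` has the form `β_a ⊗ g_a` with `‖g_a‖² = p_a`
(`exists_factor_of_mul_conjTranspose`). Completeness of the basis (`OrthonormalFam.sum_outer`)
gives `Ψ = ∑_a α_a ⊗ M_a`, and normalising `γ_a = g_a / √p_a`, `c_a = √p_a` yields the claim.
-/

open scoped BigOperators Kronecker Classical ComplexOrder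

namespace EPR

noncomputable section

/-- Complex inner product `⟨u, v⟩ = ∑ conj (u a) * v a` (conjugate-linear in the first slot). -/
def cinner {ι : Type*} [Fintype ι] (u v : ι → ℂ) : ℂ :=
  ∑ a, (starRingEnd ℂ) (u a) * v a

/-- `u` is a unit vector. -/
def IsUnitVec {ι : Type*} [Fintype ι] (u : ι → ℂ) : Prop := cinner u u = 1

/-- Rank-one projection `|u⟩⟨u|`, with entries `u k * conj (u l)`. -/
def proj {ι : Type*} [Fintype ι] (u : ι → ℂ) : Matrix ι ι ℂ :=
  Matrix.of fun k l => u k * (starRingEnd ℂ) (u l)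

/-- Rank-one operator `|u⟩⟨v|`, with entries `u k * conj (v l)`. -/
def outer {ι : Type*} [Fintype ι] (u v : ι → ℂ) : Matrix ι ι ℂ :=
  Matrix.of fun k l => u k * (starRingEnd ℂ) (v l)

/-- A state: positive semidefinite matrix of trace 1. -/
def IsState {ι : Type*} [Fintype ι] (ρ : Matrix ι ι ℂ) : Prop :=
  ρ.PosSemidef ∧ ρ.trace = 1

/-- An effect: `0 ≤ E ≤ I` in the Loewner order. -/
def IsEffect {d : ℕ} (E : Matrix (Fin d) (Fin d) ℂ) : Prop :=
  E.PosSemidef ∧ (1 - E).PosSemidef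

/-- Conditional state `Tr_A[ρ (E ⊗ I_B)]` of a bipartite state for an effect `E` on A:
entries `(E')_{b b'} = ∑_{a,a'} E_{a' a} ρ_{(a,b),(a',b')}`. -/
def condStateE {dA dB : ℕ} (ρ : Matrix (Fin dA × Fin dB) (Fin dA × Fin dB) ℂ)
    (E : Matrix (Fin dA) (Fin dA) ℂ) : Matrix (Fin dB) (Fin dB) ℂ :=
  Matrix.of fun b b' => ∑ a, ∑ a', E a' a * ρ (a, b) (a', b')

/-- Conditional state `Tr_A[ρ (|α⟩⟨α| ⊗ I_B)]` for a non-degenerate projective effect: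
entries `∑_{a,a'} conj (α a) * α a' * ρ_{(a,b),(a',b')}`. -/
def condState {dA dB : ℕ} (ρ : Matrix (Fin dA × Fin dB) (Fin dA × Fin dB) ℂ)
    (α : Fin dA → ℂ) : Matrix (Fin dB) (Fin dB) ℂ :=
  Matrix.of fun b b' => ∑ a, ∑ a', (starRingEnd ℂ) (α a) * α a' * ρ (a, b) (a', b')

/-- Tensor product vector `α ⊗ β` in `ℂ^{dA} ⊗ ℂ^{dB}`. -/
def tensor2 {dA dB : ℕ} (α : Fin dA → ℂ) (β : Fin dB → ℂ) : Fin dA × Fin dB → ℂ :=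
  fun p => α p.1 * β p.2

/-- Tensor product vector `α ⊗ β ⊗ γ` in `ℂ^{dA} ⊗ ℂ^{dB} ⊗ ℂ^{dC}`. -/
def tensor3 {dA dB dC : ℕ} (α : Fin dA → ℂ) (β : Fin dB → ℂ) (γ : Fin dC → ℂ) :
    Fin dA × Fin dB × Fin dC → ℂ :=
  fun p => α p.1 * β p.2.1 * γ p.2.2

/-- Reduced state of a tripartite pure state on AB:
`(ρ_Ψ)_{(a,b),(a',b')} = ∑_c Ψ_{a,b,c} conj (Ψ_{a',b',c})`. -/
def reducedAB {dA dB dC : ℕ} (Ψ : Fin dA × Fin dB × Fin dC → ℂ) :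
    Matrix (Fin dA × Fin dB) (Fin dA × Fin dB) ℂ :=
  Matrix.of fun p q => ∑ c, Ψ (p.1, p.2, c) * (starRingEnd ℂ) (Ψ (q.1, q.2, c))

/-- Partial contraction `⟨α|Ψ⟩ ∈ ℂ^{dB} ⊗ ℂ^{dC}`, with components
`∑_a conj (α a) Ψ_{a,b,c}`. -/
def aContract {dA dB dC : ℕ} (α : Fin dA → ℂ) (Ψ : Fin dA × Fin dB × Fin dC → ℂ) :
    Fin dB × Fin dC → ℂ :=
  fun p => ∑ a, (starRingEnd ℂ) (α a) * Ψ (a, p.1, p.2)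

/-- A family of vectors is orthonormal. For `n = d` this is an orthonormal basis of `ℂ^d`. -/
def OrthonormalFam {d n : ℕ} (α : Fin n → Fin d → ℂ) : Prop :=
  ∀ i j, cinner (α i) (α j) = if i = j then 1 else 0

/-- `ρ` is unsteerable from Alice's side for non-degenerate projective measurements:
there is a finite local-hidden-state ensemble reproducing all conditional states of
every non-degenerate projective measurement (orthonormal basis) on A. -/
def Unsteerable {dA dB : ℕ} (ρ : Matrix (Fin dA × Fin dB) (Fin dA × Fin dB) ℂ) : Prop :=
  ∃ (n : ℕ) (P : Fin n → ℝ) (σ : Fin n → Matrix (Fin dB) (Fin dB) ℂ),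
    (∀ ξ, 0 ≤ P ξ) ∧ (∑ ξ, P ξ = 1) ∧ (∀ ξ, IsState (σ ξ)) ∧
    ∀ α : Fin dA → Fin dA → ℂ, OrthonormalFam α →
      ∃ Q : Fin dA → Fin n → ℝ,
        (∀ a ξ, 0 ≤ Q a ξ ∧ Q a ξ ≤ 1) ∧ (∀ ξ, ∑ a, Q a ξ = 1) ∧
        ∀ a, condState ρ (α a) = ∑ ξ, ((Q a ξ * P ξ : ℝ) : ℂ) • σ ξ

/-- `ρ` is separable: a finite convex-type combination of product states. -/
def Separable {dA dB : ℕ} (ρ : Matrix (Fin dA × Fin dB) (Fin dA × Fin dB) ℂ) : Prop :=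
  ∃ (n : ℕ) (q : Fin n → ℝ) (ρA : Fin n → Matrix (Fin dA) (Fin dA) ℂ)
    (ρB : Fin n → Matrix (Fin dB) (Fin dB) ℂ),
    (∀ k, 0 ≤ q k) ∧ (∀ k, IsState (ρA k)) ∧ (∀ k, IsState (ρB k)) ∧
    ρ = ∑ k, ((q k : ℂ)) • (ρA k ⊗ₖ ρB k)

/-- A local hidden state model for an assemblage `As`, with outcomes `A`, measurement
labels `X`, hidden states `σ` with weights `P`, and response probabilities `R`. -/
def LHSModel {dB : ℕ} {A X : Type*} [Fintype A] {n : ℕ}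
    (As : A → X → Matrix (Fin dB) (Fin dB) ℂ)
    (P : Fin n → ℝ) (σ : Fin n → Matrix (Fin dB) (Fin dB) ℂ)
    (R : A → X → Fin n → ℝ) : Prop :=
  (∀ ξ, 0 ≤ P ξ) ∧ (∑ ξ, P ξ = 1) ∧ (∀ ξ, IsState (σ ξ)) ∧
  (∀ a x ξ, 0 ≤ R a x ξ ∧ R a x ξ ≤ 1) ∧ (∀ x ξ, ∑ a, R a x ξ = 1) ∧
  (∀ a x, As a x = ∑ ξ, ((R a x ξ * P ξ : ℝ) : ℂ) • σ ξ)

/-- Standard basis vector of `ℂ^d`. -/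
def stdb {d : ℕ} (a : Fin d) : Fin d → ℂ := fun i => if i = a then 1 else 0

/-- A factorisation `M Mᴴ = p |u⟩⟨u|` with `u` a unit vector forces every column of `M` to be a
multiple of `u`, namely `M = u ⊗ g` with `g = u* M`: the projection `Q = 1 - |u⟩⟨u|` satisfies
`(Q M)(Q M)ᴴ = Q (p |u⟩⟨u|) Qᴴ = 0`, hence `Q M = 0`. Moreover `‖g‖² = p`. -/
lemma exists_factor_of_mul_conjTranspose {m n : ℕ} (M : Matrix (Fin m) (Fin n) ℂ)
    (u : Fin m → ℂ) (hu : IsUnitVec u) (p : ℂ) (hM : M * M.conjTranspose = p • proj u) :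
    ∃ g : Fin n → ℂ, (∀ b c, M b c = u b * g c) ∧ cinner g g = p := by
  have hproj : proj u * proj u = proj u := by
    ext i j
    simp only [IsUnitVec, cinner] at hu
    simp only [proj, Matrix.mul_apply, Matrix.of_apply]
    calc _ = u i * (∑ x, (starRingEnd ℂ) (u x) * u x) * (starRingEnd ℂ) (u j) := by
          rw [Finset.mul_sum, Finset.sum_mul]
          exact Finset.sum_congr rfl fun x _ => by ring
      _ = _ := by rw [hu, mul_one]
  have hQM : (1 - proj u) * M = 0 := by
    rw [← Matrix.self_mul_conjTranspose_eq_zero, Matrix.conjTranspose_mul, Matrix.mul_assoc,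
      ← Matrix.mul_assoc M, hM, ← Matrix.mul_assoc, Matrix.mul_smul, Matrix.sub_mul, hproj]
    simp
  obtain ⟨g, hfac⟩ : ∃ g : Fin n → ℂ, ∀ b c, M b c = u b * g c := by
    refine ⟨fun c => ∑ k, (starRingEnd ℂ) (u k) * M k c, fun b c => ?_⟩
    rw [Matrix.sub_mul, Matrix.one_mul, sub_eq_zero] at hQM
    conv_lhs => rw [hQM]
    simp only [proj, Matrix.mul_apply, Matrix.of_apply, Finset.mul_sum, mul_assoc]
  refine ⟨g, hfac, ?_⟩
  -- `M Mᴴ = ‖g‖² |u⟩⟨u|`, so comparing with `p |u⟩⟨u|` at a nonzero diagonal entry gives `‖g‖² = p`.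
  obtain ⟨b, hb⟩ : ∃ b, u b ≠ 0 := by
    by_contra! h0
    simp [IsUnitVec, cinner, h0] at hu
  have hbb := congrFun (congrFun hM b) b
  simp only [proj, Matrix.mul_apply, Matrix.smul_apply, Matrix.of_apply, smul_eq_mul,
    Matrix.conjTranspose_apply] at hbb
  have hb' : u b * (starRingEnd ℂ) (u b) ≠ 0 := by simpa using hb
  apply mul_right_cancel₀ hb'
  rw [← hbb, cinner, Finset.sum_mul]
  refine Finset.sum_congr rfl fun c _ => ?_
  rw [hfac b c]
  simp only [star_mul', RCLike.star_def]
  ring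

/-- The conditional state for `α` is `M Mᴴ`, where `M` is `⟨α|Ψ⟩` read as a matrix from `C` to
`B`. -/
lemma condState_reducedAB {dA dB dC : ℕ} (Ψ : Fin dA × Fin dB × Fin dC → ℂ) (α : Fin dA → ℂ) :
    condState (reducedAB Ψ) α =
      (Matrix.of fun b c => aContract α Ψ (b, c)) *
        (Matrix.of fun b c => aContract α Ψ (b, c)).conjTranspose := by
  ext b b'
  simp only [condState, reducedAB, aContract, Matrix.mul_apply, Matrix.of_apply,
    Matrix.conjTranspose_apply, star_sum, Finset.sum_mul_sum]
  conv_rhs => rw [Finset.sum_comm]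
  refine Finset.sum_congr rfl fun a _ => ?_
  conv_rhs => rw [Finset.sum_comm]
  refine Finset.sum_congr rfl fun a' _ => ?_
  rw [Finset.mul_sum]
  refine Finset.sum_congr rfl fun c _ => ?_
  simp only [star_mul', RCLike.star_def, Complex.conj_conj]
  ring

/-- Completeness of an orthonormal family of full size: `∑_i |α_i⟩⟨α_i| = 1`. -/
lemma OrthonormalFam.sum_outer {d : ℕ} {α : Fin d → Fin d → ℂ} (hα : OrthonormalFam α)
    (x y : Fin d) : ∑ i, α i x * (starRingEnd ℂ) (α i y) = if x = y then 1 else 0 := by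
  -- For square matrices, the left inverse expressing orthonormality is also a right inverse.
  have h1 : (Matrix.of fun i x => (starRingEnd ℂ) (α i x)) * (Matrix.of fun x i => α i x) =
      (1 : Matrix (Fin d) (Fin d) ℂ) := by
    ext i j
    simpa [Matrix.mul_apply, Matrix.one_apply, cinner] using hα i j
  have h2 := mul_eq_one_comm.mp h1
  simpa [Matrix.mul_apply, Matrix.one_apply] using congrFun (congrFun h2 x) y

/-- if a non-degenerate projective measurement (orthonormal basis `α`)
steers Bob's part of the reduced state of `Ψ` to pure states `|β_a⟩⟨β_a|` with
probabilities `p_a > 0`, then `Ψ = ∑_a c_a α_a⊗β_a⊗γ_a` with unit `γ_a`, `|c_a|² = p_a`. -/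
theorem stmt4 {dA dB dC : ℕ} (Ψ : Fin dA × Fin dB × Fin dC → ℂ) (hΨ : IsUnitVec Ψ)
    (α : Fin dA → Fin dA → ℂ) (hα : OrthonormalFam α)
    (β : Fin dA → Fin dB → ℂ) (hβ : ∀ a, IsUnitVec (β a))
    (p : Fin dA → ℝ) (hp : ∀ a, 0 < p a)
    (h : ∀ a, condState (reducedAB Ψ) (α a) = (p a : ℂ) • proj (β a)) :
    ∃ (γ : Fin dA → Fin dC → ℂ) (c : Fin dA → ℂ),
      (∀ a, IsUnitVec (γ a)) ∧ (∀ a, Complex.normSq (c a) = p a) ∧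
      Ψ = ∑ a, c a • tensor3 (α a) (β a) (γ a) := by
  have hfac := fun a => exists_factor_of_mul_conjTranspose
    (Matrix.of fun b c => aContract (α a) Ψ (b, c)) (β a) (hβ a) (p a)
    ((condState_reducedAB Ψ (α a)).symm.trans (h a))
  choose g hg hgn using hfac
  have hs : ∀ a, ((√(p a) : ℝ) : ℂ) ≠ 0 := fun a => by
    exact_mod_cast (Real.sqrt_pos.mpr (hp a)).ne'
  have hs2 : ∀ a, ((√(p a) : ℝ) : ℂ) * ((√(p a) : ℝ) : ℂ) = p a := fun a => by
    exact_mod_cast Real.mul_self_sqrt (hp a).le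
  refine ⟨fun a c => ((√(p a) : ℝ) : ℂ)⁻¹ * g a c, fun a => ((√(p a) : ℝ) : ℂ), ?_, ?_, ?_⟩
  · intro a
    have hga := hgn a
    simp only [IsUnitVec, cinner] at hga ⊢
    calc _ = (((√(p a) : ℝ) : ℂ) * ((√(p a) : ℝ) : ℂ))⁻¹ *
          ∑ c, (starRingEnd ℂ) (g a c) * g a c := by
          rw [Finset.mul_sum]
          refine Finset.sum_congr rfl fun c _ => ?_
          simp only [map_mul, map_inv₀, Complex.conj_ofReal, mul_inv]
          ring
      _ = 1 := by
          rw [hga, hs2]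
          exact inv_mul_cancel₀ (by exact_mod_cast (hp a).ne')
  · intro a
    rw [Complex.normSq_ofReal, Real.mul_self_sqrt (hp a).le]
  · ext ⟨x, b, c⟩
    simp only [Finset.sum_apply, Pi.smul_apply, tensor3, smul_eq_mul]
    calc Ψ (x, b, c) = ∑ y, (∑ i, α i x * (starRingEnd ℂ) (α i y)) * Ψ (y, b, c) := by
          simp [hα.sum_outer]
      _ = ∑ i, α i x * aContract (α i) Ψ (b, c) := by
          simp only [aContract, Finset.sum_mul, Finset.mul_sum]
          rw [Finset.sum_comm]
          simp only [mul_assoc]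
      _ = _ := by
          refine Finset.sum_congr rfl fun i _ => ?_
          have hi := hg i b c
          rw [Matrix.of_apply] at hi
          rw [hi]
          have := hs i
          field_simp

end

end EPR
end

section
/- Let ρ be a bipartite state on ℂ^{dA}⊗ℂ^{dB}, let α_1,…,α_n be unit vectors in ℂ^{dA}, let β_1,…,β_n be orthonormal vectors in ℂ^{dB}, and let p_1,…,p_n > 0 with Σ_{i=1}^n p_i = 1. If Tr_A[ρ(|α_i⟩⟨α_i|⊗I_B)] = p_i|β_i⟩⟨β_i| for every i, then the vectors α_1,…,α_n are pairwise orthogonal (hence the effects |α_i⟩⟨α_i| can be extended to a single non-degenerate projective measurement). -/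
/-!
Put `e k = α k ⊗ β k`. The `β k` are orthonormal and the `α k` are unit vectors, so the `e k` are
orthonormal. Moreover
`⟨e k, ρ e k⟩ = p k`, so the compression of `ρ` to their span has trace `∑ p k = 1 = tr ρ`.
A positive semidefinite matrix whose compression to a subspace has full trace is supported on
that subspace (`mul_eq_self_of_trace_eq`), hence `ρ v = ∑ k, ⟨e k, v⟩ ρ (e k)` for all `v`.

For `i ≠ j` take `u = α i ⊗ β j`. The only possibly nonzero coefficient `⟨e k, u⟩` is
`c = ⟨α j, α i⟩`, at `k = j`, so `ρ u = c • ρ (e j)`. On the other hand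
`⟨u, ρ u⟩ = p i |⟨β i, β j⟩|² = 0`, so `ρ u = 0` by positivity. Pairing with `e j` gives
`c * p j = 0`, and therefore `c = 0`.
-/

open scoped BigOperators Kronecker Classical ComplexOrder

namespace EPR

noncomputable section

open Matrix
open scoped MatrixOrder

lemma cinner_eq_dotProduct {ι : Type*} [Fintype ι] (u v : ι → ℂ) :
    cinner u v = star u ⬝ᵥ v := rfl

lemma cinner_conj {ι : Type*} [Fintype ι] (u v : ι → ℂ) :
    (starRingEnd ℂ) (cinner u v) = cinner v u := by
  simp [cinner, mul_comm]

lemma cinner_tensor2 {dA dB : ℕ} (α α' : Fin dA → ℂ) (β β' : Fin dB → ℂ) :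
    cinner (tensor2 α β) (tensor2 α' β') = cinner α α' * cinner β β' := by
  simp only [cinner, tensor2, Fintype.sum_prod_type, Finset.sum_mul_sum, map_mul]
  exact Finset.sum_congr rfl fun a _ => Finset.sum_congr rfl fun b _ => by ring

lemma cinner_tensor2_mulVec {dA dB : ℕ} (ρ : Matrix (Fin dA × Fin dB) (Fin dA × Fin dB) ℂ)
    (α : Fin dA → ℂ) (β : Fin dB → ℂ) :
    cinner (tensor2 α β) (ρ *ᵥ tensor2 α β) = cinner β (condState ρ α *ᵥ β) := by
  simp only [cinner, tensor2, condState, mulVec, dotProduct, Fintype.sum_prod_type, map_mul,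
    Finset.mul_sum, Finset.sum_mul, Matrix.of_apply]
  rw [Finset.sum_comm]
  refine Finset.sum_congr rfl fun b _ => ?_
  rw [Finset.sum_comm' (t' := Finset.univ) (s' := fun _ => Finset.univ) (by simp)]
  rw [Finset.sum_comm]
  conv_rhs => rw [Finset.sum_comm]
  refine Finset.sum_congr rfl fun a _ => ?_
  rw [Finset.sum_comm]
  conv_rhs => rw [Finset.sum_comm]
  rw [Finset.sum_comm]
  refine Finset.sum_congr rfl fun a' _ => Finset.sum_congr rfl fun b' _ => by ring

lemma cinner_proj_mulVec {ι : Type*} [Fintype ι] (u v : ι → ℂ) :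
    cinner v (proj u *ᵥ v) = cinner v u * cinner u v := by
  simp only [cinner, proj, mulVec, dotProduct, Matrix.of_apply]
  rw [Finset.sum_mul_sum]
  simp only [Finset.mul_sum]
  exact Finset.sum_congr rfl fun a _ => Finset.sum_congr rfl fun b _ => by ring

/-- If the columns of `E` are orthonormal and the compression `Eᴴ ρ E` of a positive semidefinite
`ρ` has the same trace as `ρ`, then `ρ` is supported on the column space of `E`. -/
lemma mul_eq_self_of_trace_eq {ι κ : Type*} [Fintype ι] [Fintype κ] [DecidableEq κ]
    (ρ : Matrix ι ι ℂ) (hρ : ρ.PosSemidef) (E : Matrix ι κ ℂ) (hE : Eᴴ * E = 1)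
    (htr : (Eᴴ * ρ * E).trace = ρ.trace) : ρ * (E * Eᴴ) = ρ := by
  obtain ⟨B, rfl⟩ := CStarAlgebra.nonneg_iff_eq_star_mul_self.mp hρ.nonneg
  rw [Matrix.star_eq_conjTranspose] at htr ⊢
  have hidem : E * Eᴴ * (E * Eᴴ) = E * Eᴴ := by
    rw [Matrix.mul_assoc, ← Matrix.mul_assoc Eᴴ, hE, Matrix.one_mul]
  have htr' : (Bᴴ * B * (E * Eᴴ)).trace = (Bᴴ * B).trace := by
    rw [← htr, ← Matrix.mul_assoc, Matrix.trace_mul_comm, Matrix.mul_assoc Eᴴ]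
  -- With `Q = 1 - E Eᴴ` the complementary projection, `tr ((B Q) (B Q)ᴴ) = tr (ρ Q) = 0`.
  have hBQ : B * (1 - E * Eᴴ) = 0 := by
    rw [← Matrix.trace_mul_conjTranspose_self_eq_zero_iff]
    have hQ : (1 - E * Eᴴ) * (1 - E * Eᴴ) = 1 - E * Eᴴ := by
      rw [Matrix.mul_sub, Matrix.sub_mul, Matrix.sub_mul, hidem]
      simp
    have hQH : (1 - E * Eᴴ)ᴴ = 1 - E * Eᴴ := by simp
    rw [Matrix.conjTranspose_mul, hQH, Matrix.mul_assoc, ← Matrix.mul_assoc (1 - E * Eᴴ), hQ,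
      Matrix.trace_mul_comm, Matrix.mul_assoc, Matrix.trace_mul_comm, Matrix.mul_sub,
      Matrix.trace_sub, htr', Matrix.mul_one, sub_self]
  rw [Matrix.mul_sub, Matrix.mul_one, sub_eq_zero] at hBQ
  rw [Matrix.mul_assoc, ← hBQ]

/-- pure steered states that are orthogonal and have steering
probabilities summing to 1 force the corresponding effect vectors `α_i` to be
pairwise orthogonal. -/
theorem stmt5 {dA dB n : ℕ} (ρ : Matrix (Fin dA × Fin dB) (Fin dA × Fin dB) ℂ)
    (hρ : IsState ρ)
    (α : Fin n → Fin dA → ℂ) (hα : ∀ i, IsUnitVec (α i))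
    (β : Fin n → Fin dB → ℂ) (hβ : OrthonormalFam β)
    (p : Fin n → ℝ) (hp : ∀ i, 0 < p i) (hsum : ∑ i, p i = 1)
    (h : ∀ i, condState ρ (α i) = (p i : ℂ) • proj (β i)) :
    ∀ i j, i ≠ j → cinner (α i) (α j) = 0 := by
  intro i j hij
  have hval : ∀ k l, cinner (tensor2 (α k) (β l)) (ρ *ᵥ tensor2 (α k) (β l))
      = if k = l then (p k : ℂ) else 0 := by
    intro k l
    have hsmul : cinner (β l) (((p k : ℂ) • proj (β k)) *ᵥ β l)
        = (p k : ℂ) * cinner (β l) (proj (β k) *ᵥ β l) := by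
      rw [cinner_eq_dotProduct, cinner_eq_dotProduct, smul_mulVec, dotProduct_smul, smul_eq_mul]
    rw [cinner_tensor2_mulVec, h, hsmul, cinner_proj_mulVec, hβ, hβ]
    by_cases hkl : k = l
    · simp [hkl]
    · simp [hkl]
  -- The columns of `E` are the vectors `α k ⊗ β k`.
  let E : Matrix (Fin dA × Fin dB) (Fin n) ℂ := Matrix.of fun q k => tensor2 (α k) (β k) q
  have hEapp : ∀ v k, (Eᴴ *ᵥ v) k = cinner (tensor2 (α k) (β k)) v := fun v k => rfl
  have hE : Eᴴ * E = 1 := by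
    ext k l
    have : (Eᴴ * E) k l = cinner (tensor2 (α k) (β k)) (tensor2 (α l) (β l)) := rfl
    rw [this, cinner_tensor2, hβ, Matrix.one_apply]
    by_cases hkl : k = l
    · subst hkl
      rw [if_pos rfl, mul_one]
      exact hα k
    · simp [hkl]
  have htr : (Eᴴ * ρ * E).trace = ρ.trace := by
    have hdiag : ∀ k, (Eᴴ * ρ * E) k k = (p k : ℂ) := by
      intro k
      have := hval k k
      rw [if_pos rfl] at this
      rw [← this, Matrix.mul_assoc]
      rfl
    rw [hρ.2, Matrix.trace]
    simp only [Matrix.diag_apply]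
    rw [Finset.sum_congr rfl fun k _ => hdiag k]
    exact_mod_cast hsum
  have hsupp := mul_eq_self_of_trace_eq ρ hρ.1 E hE htr
  have hu0 : ρ *ᵥ tensor2 (α i) (β j) = 0 := by
    rw [← hρ.1.dotProduct_mulVec_zero_iff, ← cinner_eq_dotProduct, hval, if_neg hij]
  have hEu : E *ᵥ (Eᴴ *ᵥ tensor2 (α i) (β j))
      = cinner (α j) (α i) • tensor2 (α j) (β j) := by
    have hcoef : Eᴴ *ᵥ tensor2 (α i) (β j) = Pi.single j (cinner (α j) (α i)) := by
      ext k
      rw [hEapp, cinner_tensor2, hβ]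
      by_cases hkj : k = j
      · subst hkj
        simp
      · simp [hkj]
    rw [hcoef]
    ext q
    simp [E, mul_comm]
  have hzero : cinner (α j) (α i) • (ρ *ᵥ tensor2 (α j) (β j)) = 0 := by
    rw [← mulVec_smul, ← hEu, mulVec_mulVec, mulVec_mulVec, Matrix.mul_assoc, hsupp, hu0]
  have hprod : cinner (α j) (α i) * (p j : ℂ) = 0 := by
    have hjj := hval j j
    rw [if_pos rfl] at hjj
    rw [← hjj, cinner_eq_dotProduct (tensor2 _ _), ← smul_eq_mul, ← dotProduct_smul, hzero,
      dotProduct_zero]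
  have hc : cinner (α j) (α i) = 0 :=
    (mul_eq_zero.mp hprod).resolve_right (by exact_mod_cast (hp j).ne')
  rw [← cinner_conj, hc, map_zero]

end

end EPR
end

section
/- Let {A'_{a|x}} be an assemblage admitting a local hidden state model with ensemble {(P(ξ), σ_ξ)}_{ξ∈Ξ}. Suppose for one measurement x₀ with outcomes a = 1,…,n there are unit vectors β_1,…,β_n with pairwise distinct projections |β_a⟩⟨β_a| and p_1,…,p_n > 0 with Σ_a p_a = 1 such that A'_{a|x₀} = p_a|β_a⟩⟨β_a| for each a. Then the hidden state ensemble is forced to be exactly {(p_a, |β_a⟩⟨β_a|)}: every ξ with P(ξ) > 0 satisfies σ_ξ = |β_a⟩⟨β_a| for some a, and Σ_{ξ : σ_ξ = |β_a⟩⟨β_a|} P(ξ) = p_a for every a. -/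
/-!
The measurement `x₀` writes each pure operator `p a • |β a⟩⟨β a|` as a nonnegative combination of
the hidden states. Rank-one positive operators are extreme rays of the positive cone, so every
hidden state that occurs with positive coefficient `R a x₀ ξ * P ξ` equals `|β a⟩⟨β a|`
(`state_eq_proj_of_sum_eq`). Every `ξ` with `P ξ > 0` occurs for some outcome `a`, and, the
projections being distinct, only for that one. Hence `R a x₀ ξ * P ξ` is `P ξ` if
`σ ξ = |β a⟩⟨β a|` and `0` otherwise; comparing traces then gives the weights.
-/

open scoped BigOperators Kronecker Classical ComplexOrder

namespace EPR

noncomputable section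

lemma proj_mulVec {ι : Type*} [Fintype ι] (u v : ι → ℂ) :
    (proj u).mulVec v = cinner u v • u := by
  ext k
  simp only [proj, Matrix.mulVec, dotProduct, Matrix.of_apply, cinner, Pi.smul_apply,
    smul_eq_mul, Finset.sum_mul]
  exact Finset.sum_congr rfl fun _ _ => by ring

lemma trace_proj {ι : Type*} [Fintype ι] {u : ι → ℂ} (hu : IsUnitVec u) :
    (proj u).trace = 1 := by
  rw [← hu]
  simp only [Matrix.trace, Matrix.diag_apply, proj, Matrix.of_apply, cinner]
  exact Finset.sum_congr rfl fun _ _ => mul_comm _ _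

/-- A state whose kernel contains the orthogonal complement of a unit vector `u` is `|u⟩⟨u|`. -/
lemma IsState.eq_proj {ι : Type*} [Fintype ι] {ρ : Matrix ι ι ℂ} (hρ : IsState ρ)
    {u : ι → ℂ} (hu : IsUnitVec u)
    (hker : ∀ v, cinner u v = 0 → ρ.mulVec v = 0) : ρ = proj u := by
  -- Splitting off the component along `u` gives `ρ w = ⟨u, w⟩ ρ u`.
  have hw : ∀ w, ρ.mulVec w = cinner u w • ρ.mulVec u := by
    intro w
    have h0 : cinner u (w - cinner u w • u) = 0 := by
      have : cinner u (w - cinner u w • u) = cinner u w - cinner u w * cinner u u := by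
        simp only [cinner, Pi.sub_apply, Pi.smul_apply, smul_eq_mul, mul_sub,
          Finset.sum_sub_distrib]
        congr 1
        rw [Finset.mul_sum]
        exact Finset.sum_congr rfl fun _ _ => by ring
      rw [this, show cinner u u = 1 from hu]
      ring
    have := hker _ h0
    rw [Matrix.mulVec_sub, Matrix.mulVec_smul, sub_eq_zero] at this
    exact this
  have hent : ∀ k l, ρ k l = ρ.mulVec u k * (starRingEnd ℂ) (u l) := by
    intro k l
    have := congrFun (hw (Pi.single l 1)) k
    simp [cinner, Pi.single_apply] at this
    rw [this, mul_comm]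
  have hherm : ∀ k l, ρ k l = (starRingEnd ℂ) (ρ l k) := fun k l =>
    (hρ.1.isHermitian.apply k l).symm
  -- The trace of `|ρ u⟩⟨u|` is `⟨u, ρ u⟩`.
  have htr : ∑ l, ρ.mulVec u l * (starRingEnd ℂ) (u l) = 1 := by
    rw [← hρ.2]
    exact Finset.sum_congr rfl fun l _ => (hent l l).symm
  -- Hermiticity makes `ρ u` a multiple of `u`, and the trace makes the multiple `1`.
  have hru : ∀ k, ρ.mulVec u k = u k := by
    intro k
    have h1 : ∀ l, ρ k l * u l = u k * ((starRingEnd ℂ) (ρ.mulVec u l) * u l) := by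
      intro l
      rw [hherm k l, hent l k]
      simp
      ring
    have h2 : ∑ l, (starRingEnd ℂ) (ρ.mulVec u l) * u l = 1 := by
      have := congrArg (starRingEnd ℂ) htr
      simpa using this
    calc ρ.mulVec u k = ∑ l, ρ k l * u l := rfl
      _ = u k := by rw [Finset.sum_congr rfl fun l _ => h1 l, ← Finset.mul_sum, h2, mul_one]
  ext k l
  rw [hent, hru]
  rfl

/-- Extremality of pure states: a state that enters a nonnegative decomposition of a multiple
of `|u⟩⟨u|` with positive coefficient equals `|u⟩⟨u|`. -/
lemma state_eq_proj_of_sum_eq {ι κ : Type*} [Fintype ι] [Fintype κ]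
    {σ : κ → Matrix ι ι ℂ} (hσ : ∀ ξ, IsState (σ ξ)) {c : κ → ℝ} (hc : ∀ ξ, 0 ≤ c ξ)
    {u : ι → ℂ} (hu : IsUnitVec u) {q : ℂ}
    (hsum : q • proj u = ∑ ξ, (c ξ : ℂ) • σ ξ) {ξ : κ} (hξ : 0 < c ξ) :
    σ ξ = proj u := by
  refine (hσ ξ).eq_proj hu fun v hv => ?_
  have h0 : ∑ ξ, (c ξ : ℂ) * (star v ⬝ᵥ (σ ξ).mulVec v) = 0 := by
    have := congrArg (fun M : Matrix ι ι ℂ => star v ⬝ᵥ M.mulVec v) hsum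
    simp only [Matrix.smul_mulVec, proj_mulVec, hv, zero_smul, smul_zero, dotProduct_zero,
      Matrix.sum_mulVec, dotProduct_sum, dotProduct_smul, smul_eq_mul] at this
    exact this.symm
  have hnn : ∀ ξ ∈ Finset.univ, 0 ≤ (c ξ : ℂ) * (star v ⬝ᵥ (σ ξ).mulVec v) := fun ξ _ =>
    mul_nonneg (by exact_mod_cast hc ξ) ((hσ ξ).1.dotProduct_mulVec_nonneg v)
  have h1 := (Finset.sum_eq_zero_iff_of_nonneg hnn).1 h0 ξ (Finset.mem_univ _)
  rcases mul_eq_zero.1 h1 with h2 | h2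
  · exact absurd (by exact_mod_cast h2) hξ.ne'
  · exact ((hσ ξ).1.dotProduct_mulVec_zero_iff v).1 h2

/-- if one measurement `x₀` of an assemblage with an LHS model has all
its members pure, `A'_{a|x₀} = p_a |β_a⟩⟨β_a|` with pairwise distinct projections and
`∑ p_a = 1`, then the hidden state ensemble is exactly `{(p_a, |β_a⟩⟨β_a|)}`. -/
theorem stmt13 {dB n nout : ℕ} {X : Type*}
    (As : Fin nout → X → Matrix (Fin dB) (Fin dB) ℂ)
    (P : Fin n → ℝ) (σ : Fin n → Matrix (Fin dB) (Fin dB) ℂ)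
    (R : Fin nout → X → Fin n → ℝ)
    (hmodel : LHSModel As P σ R) (x₀ : X)
    (β : Fin nout → Fin dB → ℂ) (hβ : ∀ a, IsUnitVec (β a))
    (hdist : ∀ a b, a ≠ b → proj (β a) ≠ proj (β b))
    (p : Fin nout → ℝ) (hp : ∀ a, 0 < p a) (hsum : ∑ a, p a = 1)
    (h : ∀ a, As a x₀ = (p a : ℂ) • proj (β a)) :
    (∀ ξ, 0 < P ξ → ∃ a, σ ξ = proj (β a)) ∧
    (∀ a, ∑ ξ ∈ Finset.univ.filter (fun ξ => σ ξ = proj (β a)), P ξ = p a) := by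
  obtain ⟨hP, -, hσ, hR, hR1, hAs⟩ := hmodel
  have key : ∀ a ξ, 0 < R a x₀ ξ * P ξ → σ ξ = proj (β a) := fun a ξ hpos =>
    state_eq_proj_of_sum_eq hσ (c := fun ξ => R a x₀ ξ * P ξ)
      (fun ξ => mul_nonneg (hR a x₀ ξ).1 (hP ξ)) (hβ a) ((h a).symm.trans (hAs a x₀)) hpos
  have hzero : ∀ a ξ, σ ξ ≠ proj (β a) → R a x₀ ξ * P ξ = 0 := fun a ξ hne =>
    ((mul_nonneg (hR a x₀ ξ).1 (hP ξ)).eq_or_lt.resolve_right fun hpos => hne (key a ξ hpos)).symm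
  have htot : ∀ ξ, ∑ a, R a x₀ ξ * P ξ = P ξ := fun ξ => by
    rw [← Finset.sum_mul, hR1, one_mul]
  refine ⟨fun ξ hξ => ?_, fun a => ?_⟩
  · by_contra! hne
    exact hξ.ne' ((htot ξ).symm.trans (Finset.sum_eq_zero fun a _ => hzero a ξ (hne a)))
  · have htr : ∑ ξ, R a x₀ ξ * P ξ = p a := by
      have := congrArg Matrix.trace ((h a).symm.trans (hAs a x₀))
      simp only [Matrix.trace_smul, trace_proj (hβ a), Matrix.trace_sum, (hσ _).2, smul_eq_mul,
        mul_one] at this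
      exact_mod_cast this.symm
    rw [← htr, Finset.sum_filter]
    refine Finset.sum_congr rfl fun ξ _ => ?_
    split_ifs with hξ
    · refine (htot ξ).symm.trans
        (Finset.sum_eq_single a (fun b _ hb => hzero b ξ ?_) (by simp))
      rw [hξ]
      exact hdist a b hb.symm
    · exact (hzero a ξ hξ).symm

end

end EPR
end
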